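/- Let $\lambda, \mu > 0$, and let $j, k$ be positive integers. Define $M = \frac{\lambda^{k+j} z_1^{k-1} z_2^{j-1}}{\Gamma(k)\Gamma(j)}$. Then $\int_{\mathbb{R}_+^8} \mathbf{1}\{z_4 > x + z_3\}\mathbf{1}\{z_5 > x\}\mathbf{1}\{z_7 > y\}\mathbf{1}\{z_8 + z_9 + z_1 - z_6 > y\}\mathbf{1}\{z_1 + z_8 < z_6\}\,\mu^6 e^{-\mu(z_4+z_5+z_6+z_7+z_8+z_9)} M e^{-\lambda(z_1+z_3)}\,dz = \frac{1}{4}e^{-2\mu(x+y)}\left(\frac{\lambda}{\mu+\lambda}\right)^{j+k}$ for all $x, y \geq 0$, where the integration is over $z_1, z_3, z_4, z_5, z_6, z_7, z_8, z_9$. -/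

import Mathlib

open MeasureTheory Real

/-!
Every `z` is an independent random variable, `z1` and `z3` Gamma and the others exponential of rate
`mu`, and the integral is the probability of an event that splits into four independent parts. The
tails `x < z5` and `y < z7` contribute `exp (-(mu * x))` and `exp (-(mu * y))`. For an exponential
`u` and an independent `w ≥ 0`, `P(a + w < u) = exp (-(mu * a)) * E[exp (-(mu * w))]`, which settles
`x + z3 < z4`. In the remaining part `z6` exceeds `z8 + z1` by less than `z9 - y`: by memorylessness
the excess is again exponential, so the probability is
`E[exp (-(mu * z8))] * E[exp (-(mu * z1))] * P(y + s < z9)` with `s` exponential, and each of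
`E[exp (-(mu * z8))]` and `E[exp (-(mu * s))]` is `1 / 2`.
-/

open ProbabilityTheory Set

section FiniteMeasure

variable {α β : Type*} [MeasurableSpace α] [MeasurableSpace β]

lemma integral_ite_one_zero (μ : Measure α) {P : α → Prop} [DecidablePred P]
    (hP : MeasurableSet {a | P a}) :
    ∫ a, (if P a then (1 : ℝ) else 0) ∂μ = μ.real {a | P a} := by
  rw [← integral_indicator_one hP]
  simp only [indicator_apply, mem_ofPred_eq, Pi.one_apply]

lemma integral_measureReal_swap (μ : Measure α) (ν : Measure β)
    [IsFiniteMeasure μ] [IsFiniteMeasure ν] {P : α → β → Prop}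
    (hP : MeasurableSet {p : α × β | P p.1 p.2}) :
    ∫ a, ν.real {b | P a b} ∂μ = ∫ b, μ.real {a | P a b} ∂ν := by
  classical
  have h_int : Integrable (Function.uncurry fun a b ↦ if P a b then (1 : ℝ) else 0) (μ.prod ν) :=
    ((integrable_const (1 : ℝ)).indicator hP).congr
      (ae_of_all _ fun p ↦ by simp [indicator_apply, Function.uncurry_def])
  have h_swap := integral_integral_swap h_int
  simp_rw [fun a ↦ integral_ite_one_zero (P := fun b ↦ P a b) ν (measurable_prodMk_left hP),
    fun b ↦ integral_ite_one_zero (P := fun a ↦ P a b) μ (measurable_prodMk_right hP)] at h_swap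
  exact h_swap

end FiniteMeasure

section GammaMeasure

variable {a r : ℝ}

lemma integral_gammaMeasure {E : Type*} [NormedAddCommGroup E] [NormedSpace ℝ E]
    (ha : 0 < a) (hr : 0 < r) (f : ℝ → E) :
    ∫ z, f z ∂gammaMeasure a r =
      ∫ z in Ioi 0, (r ^ a / Gamma a * z ^ (a - 1) * exp (-(r * z))) • f z := by
  have h_meas : Measurable (gammaPDF a r) := (measurable_gammaPDFReal a r).ennreal_ofReal
  rw [gammaMeasure, integral_withDensity_eq_integral_toReal_smul h_meas
    (ae_of_all _ fun _ ↦ ENNReal.ofReal_lt_top), ← integral_Ici_eq_integral_Ioi,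
    ← integral_indicator measurableSet_Ici]
  congr 1 with z
  rw [gammaPDF, ENNReal.toReal_ofReal (gammaPDFReal_nonneg ha hr z), gammaPDFReal]
  simp only [indicator_apply, mem_Ici, ite_smul, zero_smul]

lemma integral_expMeasure {E : Type*} [NormedAddCommGroup E] [NormedSpace ℝ E]
    (hr : 0 < r) (f : ℝ → E) :
    ∫ z, f z ∂expMeasure r = ∫ z in Ioi 0, (r * exp (-(r * z))) • f z := by
  simp only [expMeasure, integral_gammaMeasure one_pos hr, rpow_one, Gamma_one, div_one, sub_self,
    rpow_zero, mul_one]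

lemma gammaMeasure_Iio_zero (a r : ℝ) : gammaMeasure a r (Iio 0) = 0 := by
  rw [gammaMeasure, withDensity_apply _ measurableSet_Iio, lintegral_gammaPDF_of_nonpos le_rfl]

lemma ae_nonneg_gammaMeasure (a r : ℝ) : ∀ᵐ z ∂gammaMeasure a r, 0 ≤ z := by
  simpa only [ae_iff, not_le] using! gammaMeasure_Iio_zero a r

lemma integral_exp_neg_mul_gammaMeasure (ha : 0 < a) (hr : 0 < r) {s : ℝ} (hs : 0 < s + r) :
    ∫ z, exp (-(s * z)) ∂gammaMeasure a r = (r / (s + r)) ^ a := by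
  have h_density (z : ℝ) : r ^ a / Gamma a * z ^ (a - 1) * exp (-(r * z)) * exp (-(s * z)) =
      r ^ a / Gamma a * (z ^ (a - 1) * exp (-((s + r) * z))) := by
    rw [show -((s + r) * z) = -(r * z) + -(s * z) by ring, exp_add]
    ring
  have h_Gamma : Gamma a ≠ 0 := (Gamma_pos_of_pos ha).ne'
  simp_rw [integral_gammaMeasure ha hr, smul_eq_mul, h_density]
  rw [integral_const_mul, integral_rpow_mul_exp_neg_mul_Ioi ha hs, div_rpow zero_le_one hs.le,
    one_rpow, div_rpow hr.le hs.le]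
  field_simp

end GammaMeasure

section ExpMeasure

variable {r : ℝ}

lemma integral_exp_neg_mul_expMeasure (hr : 0 < r) {s : ℝ} (hs : 0 < s + r) :
    ∫ z, exp (-(s * z)) ∂expMeasure r = r / (s + r) := by
  rw [expMeasure, integral_exp_neg_mul_gammaMeasure one_pos hr hs, rpow_one]

lemma expMeasure_real_Ioi (hr : 0 < r) {x : ℝ} (hx : 0 ≤ x) :
    (expMeasure r).real (Ioi x) = exp (-(r * x)) := by
  have := isProbabilityMeasure_expMeasure hr
  rw [← compl_Iic, probReal_compl_eq_one_sub measurableSet_Iic, ← cdf_eq_real,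
    cdf_expMeasure_eq hr, if_pos hx, sub_sub_cancel]

lemma expMeasure_memoryless (hr : 0 < r) {x : ℝ} (hx : 0 ≤ x) (h : ℝ) :
    (expMeasure r).real (Ioo x (x + h)) = exp (-(r * x)) * (expMeasure r).real (Iio h) := by
  have := isProbabilityMeasure_expMeasure hr
  have : NullSingletonClass (expMeasure r) := nullSingletonClass_withDensity _
  obtain h_neg | h_nonneg := lt_or_ge h 0
  · have h_Iio : (expMeasure r).real (Iio h) = 0 :=
      (measureReal_eq_zero_iff).2 (measure_mono_null (Iio_subset_Iio h_neg.le)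
        (gammaMeasure_Iio_zero 1 r))
    rw [h_Iio, mul_zero, Ioo_eq_empty (by linarith), measureReal_empty]
  · rw [measureReal_congr Ioo_ae_eq_Ioc, measureReal_congr Iio_ae_eq_Iic, ← Ioi_sdiff_Ioi,
      measureReal_sdiff (Ioi_subset_Ioi (by linarith)) measurableSet_Ioi, ← compl_Ioi,
      probReal_compl_eq_one_sub measurableSet_Ioi, expMeasure_real_Ioi hr hx,
      expMeasure_real_Ioi hr h_nonneg, expMeasure_real_Ioi hr (by linarith), mul_add, neg_add,
      exp_add]
    ring

lemma ae_nonneg_expMeasure (r : ℝ) : ∀ᵐ z ∂expMeasure r, 0 ≤ z :=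
  ae_nonneg_gammaMeasure 1 r

variable {ρ : Measure ℝ} [IsFiniteMeasure ρ]

lemma integral_expMeasure_measureReal_add_lt (hr : 0 < r) (hρ : ∀ᵐ z ∂ρ, 0 ≤ z)
    {y : ℝ} (hy : 0 ≤ y) :
    ∫ u, ρ.real {z | y + z < u} ∂expMeasure r = exp (-(r * y)) * ∫ z, exp (-(r * z)) ∂ρ := by
  have := isProbabilityMeasure_expMeasure hr
  rw [integral_measureReal_swap (P := fun u z ↦ y + z < u) _ _ (by measurability),
    ← integral_const_mul]
  refine integral_congr_ae (hρ.mono fun z hz ↦ ?_)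
  exact (expMeasure_real_Ioi hr (add_nonneg hy hz)).trans (by rw [mul_add, neg_add, exp_add])

lemma integral_expMeasure_measureReal_overshoot_lt (hr : 0 < r) (hρ : ∀ᵐ z ∂ρ, 0 ≤ z)
    {t : ℝ} (ht : 0 ≤ t) (h : ℝ) :
    ∫ s, ρ.real {z | t + z < s ∧ s < t + z + h} ∂expMeasure r =
      exp (-(r * t)) * (∫ z, exp (-(r * z)) ∂ρ) * (expMeasure r).real (Iio h) := by
  have := isProbabilityMeasure_expMeasure hr
  rw [integral_measureReal_swap (P := fun s z ↦ t + z < s ∧ s < t + z + h) _ _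
    (by measurability), ← integral_const_mul, ← integral_mul_const]
  refine integral_congr_ae (hρ.mono fun z hz ↦ ?_)
  exact (expMeasure_memoryless hr (add_nonneg ht hz) h).trans (by rw [mul_add, neg_add, exp_add])

lemma integral_expMeasure_overlap (hr : 0 < r) (hρ : ∀ᵐ z ∂ρ, 0 ≤ z) {p q : ℝ} (hp : 0 < p)
    (hq : 0 < q) {y : ℝ} (hy : 0 ≤ y) :
    ∫ u, ∫ t, ∫ s, ρ.real {z | y < t + u + z - s ∧ z + t < s}
        ∂expMeasure r ∂expMeasure p ∂expMeasure q =
      exp (-(q * y)) * (r / (q + r)) * (p / (r + p)) * ∫ z, exp (-(r * z)) ∂ρ := by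
  have := isProbabilityMeasure_expMeasure hr
  have h_event (u t s : ℝ) : {z | y < t + u + z - s ∧ z + t < s} =
      {z | t + z < s ∧ s < t + z + (u - y)} := by
    ext z
    constructor <;> rintro ⟨h₁, h₂⟩ <;> constructor <;> linarith
  have h_fiber (u : ℝ) : ∫ t, ∫ s, ρ.real {z | y < t + u + z - s ∧ z + t < s}
        ∂expMeasure r ∂expMeasure p =
      p / (r + p) * (∫ z, exp (-(r * z)) ∂ρ) * (expMeasure r).real {s | y + s < u} := by
    rw [← integral_exp_neg_mul_expMeasure hp (add_pos hr hp), ← integral_mul_const,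
      ← integral_mul_const]
    refine integral_congr_ae ((ae_nonneg_expMeasure p).mono fun t ht ↦ ?_)
    simp_rw [h_event, integral_expMeasure_measureReal_overshoot_lt hr hρ ht, Iio,
      lt_sub_iff_add_lt']
  simp_rw [h_fiber]
  rw [integral_const_mul, integral_expMeasure_measureReal_add_lt hq (ae_nonneg_expMeasure r) hy,
    integral_exp_neg_mul_expMeasure hr (add_pos hq hr)]
  ring

lemma integral_contained_pairs (hr : 0 < r) {σ : Measure ℝ} [IsFiniteMeasure σ]
    (hρ : ∀ᵐ z ∂ρ, 0 ≤ z) (hσ : ∀ᵐ z ∂σ, 0 ≤ z) {x y : ℝ} (hx : 0 ≤ x) (hy : 0 ≤ y) :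
    ∫ z9, ∫ z8, ∫ z7, ∫ z6, ∫ z5, ∫ z4, ∫ z3, ∫ z1,
        (if z4 > x + z3 ∧ z5 > x ∧ z7 > y ∧ z8 + z9 + z1 - z6 > y ∧ z1 + z8 < z6
          then (1 : ℝ) else 0)
        ∂ρ ∂σ ∂expMeasure r ∂expMeasure r ∂expMeasure r ∂expMeasure r ∂expMeasure r ∂expMeasure r =
      1 / 4 * exp (-(2 * r * (x + y))) *
        ((∫ z, exp (-(r * z)) ∂σ) * ∫ z, exp (-(r * z)) ∂ρ) := by
  have h_factor (z9 z8 z7 z6 z5 z4 z3 z1 : ℝ) :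
      (if z4 > x + z3 ∧ z5 > x ∧ z7 > y ∧ z8 + z9 + z1 - z6 > y ∧ z1 + z8 < z6
        then (1 : ℝ) else 0) =
      (if y < z7 then 1 else 0) * ((if x < z5 then 1 else 0) * ((if x + z3 < z4 then 1 else 0) *
        (if y < z8 + z9 + z1 - z6 ∧ z1 + z8 < z6 then 1 else 0))) := by
    simp only [ite_zero_mul_ite_zero, mul_one]
    exact if_congr (by tauto) rfl rfl
  have h_tail {a : ℝ} (ha : 0 ≤ a) :
      ∫ z, (if a < z then (1 : ℝ) else 0) ∂expMeasure r = exp (-(r * a)) :=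
    (integral_ite_one_zero _ measurableSet_Ioi).trans (expMeasure_real_Ioi hr ha)
  have h_exp : exp (-(2 * r * (x + y))) =
      exp (-(r * x)) * exp (-(r * x)) * (exp (-(r * y)) * exp (-(r * y))) := by
    simp only [← exp_add]
    ring_nf
  simp_rw [h_factor, integral_const_mul, integral_mul_const, integral_const_mul]
  rw [h_tail hx, h_tail hy]
  simp (disch := measurability) only [integral_ite_one_zero]
  rw [integral_expMeasure_measureReal_add_lt hr hσ hx, integral_expMeasure_overlap hr hρ hr hr hy,
    h_exp]
  field_simp
  ring

end ExpMeasure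

theorem contained_pairs_second_term_general (lam mu : ℝ) (hlam : 0 < lam) (hmu : 0 < mu)
    (j k : ℝ) (hj : 0 < j) (hk : 0 < k) (x y : ℝ) (hx : 0 ≤ x) (hy : 0 ≤ y) :
    (∫ z9 in Ioi (0:ℝ), ∫ z8 in Ioi (0:ℝ), ∫ z7 in Ioi (0:ℝ),
      ∫ z6 in Ioi (0:ℝ), ∫ z5 in Ioi (0:ℝ), ∫ z4 in Ioi (0:ℝ),
        ∫ z3 in Ioi (0:ℝ), ∫ z1 in Ioi (0:ℝ),
          (if z4 > x + z3 ∧ z5 > x ∧ z7 > y ∧ z8 + z9 + z1 - z6 > y ∧ z1 + z8 < z6 then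
            mu ^ 6 * exp (-(mu * (z4 + z5 + z6 + z7 + z8 + z9))) *
              (lam ^ (k + j) * z1 ^ (k - 1) * z3 ^ (j - 1) / (Gamma k * Gamma j)) *
              exp (-(lam * (z1 + z3)))
          else 0)) =
      1 / 4 * exp (-(2 * mu * (x + y))) * (lam / (mu + lam)) ^ (j + k) := by
  have := isProbabilityMeasure_gammaMeasure hj hlam
  have := isProbabilityMeasure_gammaMeasure hk hlam
  rw [rpow_add (div_pos hlam (add_pos hmu hlam)),
    ← integral_exp_neg_mul_gammaMeasure hj hlam (add_pos hmu hlam),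
    ← integral_exp_neg_mul_gammaMeasure hk hlam (add_pos hmu hlam),
    ← integral_contained_pairs hmu (ae_nonneg_gammaMeasure k lam) (ae_nonneg_gammaMeasure j lam)
      hx hy]
  simp only [integral_expMeasure hmu, integral_gammaMeasure hj hlam, integral_gammaMeasure hk hlam,
    ← integral_const_mul, smul_eq_mul, mul_add, neg_add, exp_add, rpow_add hlam, mul_ite, mul_one,
    mul_zero]
  -- Below the eight integrals and the condition, the product of the densities is the integrand.
  congr! 17
  ring

theorem contained_pairs_second_term (lam mu : ℝ) (hlam : 0 < lam) (hmu : 0 < mu)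
    (j k : ℕ) (hj : 1 ≤ j) (hk : 1 ≤ k) (x y : ℝ) (hx : 0 ≤ x) (hy : 0 ≤ y) :
    (∫ z9 in Set.Ioi (0:ℝ), ∫ z8 in Set.Ioi (0:ℝ), ∫ z7 in Set.Ioi (0:ℝ),
      ∫ z6 in Set.Ioi (0:ℝ), ∫ z5 in Set.Ioi (0:ℝ), ∫ z4 in Set.Ioi (0:ℝ),
        ∫ z3 in Set.Ioi (0:ℝ), ∫ z1 in Set.Ioi (0:ℝ),
          (if z4 > x + z3 ∧ z5 > x ∧ z7 > y ∧ z8 + z9 + z1 - z6 > y ∧ z1 + z8 < z6 then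
            mu ^ 6 * Real.exp (-(mu * (z4 + z5 + z6 + z7 + z8 + z9))) *
              (lam ^ (k + j) * z1 ^ (k - 1) * z3 ^ (j - 1) /
                (Real.Gamma k * Real.Gamma j)) *
              Real.exp (-(lam * (z1 + z3)))
          else 0)) =
      1 / 4 * Real.exp (-(2 * mu * (x + y))) * (lam / (mu + lam)) ^ (j + k) := by
  simpa only [← Nat.cast_pred hj, ← Nat.cast_pred hk, ← Nat.cast_add, rpow_natCast] using
    contained_pairs_second_term_general lam mu hlam hmu j k (mod_cast hj) (mod_cast hk) x y hx hy
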